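/- arXiv:1310.6921 — 11 statements merged into one kernel-verified Lean document; each statement's English description precedes it below -/
import Mathlib

section
/- Let R = (c_1, …, c_r) be a finite family of rankings of Fin n (r ≥ 1). Then the competitivity graph G_c(R) is semi-cohesive; concretely, the labeling of the nodes by their positions in c_1 is a semi-cohesive vertex-set order: whenever a and b compete and c_1⁻¹(a) < c_1⁻¹(x) < c_1⁻¹(b), then a and x compete or x and b compete. -/
/-- `i` precedes `j` in the ranking `c` (i.e. the position of `i` is smaller). -/
def Prec {n : ℕ} (c : Equiv.Perm (Fin n)) (i j : Fin n) : Prop :=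
  c⁻¹ i < c⁻¹ j

/-- Two nodes compete with respect to a family of rankings `c`. -/
def Compete {n r : ℕ} (c : Fin r → Equiv.Perm (Fin n)) (i j : Fin n) : Prop :=
  ∃ s t : Fin r, Prec (c s) i j ∧ Prec (c t) j i

/-- The competitivity graph of a family of rankings. -/
def competitivityGraph {n r : ℕ} (c : Fin r → Equiv.Perm (Fin n)) :
    SimpleGraph (Fin n) where
  Adj i j := Compete c i j
  symm := by
    constructor
    rintro i j ⟨s, t, h1, h2⟩
    exact ⟨t, s, h2, h1⟩
  loopless := by
    constructor
    rintro i ⟨s, t, h1, _⟩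
    exact lt_irrefl _ h1

/-- Every competitivity graph is semi-cohesive: the labeling of the nodes by their
positions in the first ranking `c_1` is a semi-cohesive vertex-set order. -/
theorem competitivityGraph_semiCohesive {n r : ℕ} (hr : 1 ≤ r)
    (c : Fin r → Equiv.Perm (Fin n)) (a b x : Fin n)
    (hab : (competitivityGraph c).Adj a b)
    (hax : (c ⟨0, hr⟩)⁻¹ a < (c ⟨0, hr⟩)⁻¹ x)
    (hxb : (c ⟨0, hr⟩)⁻¹ x < (c ⟨0, hr⟩)⁻¹ b) :
    (competitivityGraph c).Adj a x ∨ (competitivityGraph c).Adj x b := by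
  obtain ⟨s, t, _, h2⟩ := hab
  rcases lt_or_ge ((c t)⁻¹ x) ((c t)⁻¹ a) with h | h
  · exact Or.inl ⟨⟨0, hr⟩, t, hax, h⟩
  · exact Or.inr ⟨⟨0, hr⟩, t, hxb, lt_of_lt_of_le h2 h⟩
end

section
/- For every n ≥ 5, the cycle graph C_n on n vertices has no semi-cohesive vertex-set order. -/
/-- The cycle graph on `Fin n`: `i` and `j` are adjacent exactly when they are
consecutive modulo `n`. -/
def cycleGraph (n : ℕ) : SimpleGraph (Fin n) where
  Adj i j := i ≠ j ∧ ((i.val + 1) % n = j.val ∨ (j.val + 1) % n = i.val)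
  symm := by
    constructor
    rintro i j ⟨h, h'⟩
    exact ⟨h.symm, h'.symm⟩
  loopless := by
    constructor
    rintro i ⟨h, _⟩
    exact h rfl

theorem succ_mod_eq (n k : ℕ) (hk : k < n) :
    (k + 1) % n = if k + 1 = n then 0 else k + 1 := by
  split_ifs with h
  · rw [h, Nat.mod_self]
  · exact Nat.mod_eq_of_lt (by omega)

theorem cycleGraph_adj_iff (n : ℕ) (i j : Fin n) : (cycleGraph n).Adj i j ↔
    i.val ≠ j.val ∧ ((if i.val + 1 = n then 0 else i.val + 1) = j.val ∨
      (if j.val + 1 = n then 0 else j.val + 1) = i.val) := by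
  rw [← succ_mod_eq n i i.2, ← succ_mod_eq n j j.2, Ne, ← Fin.ext_iff]
  rfl

/-- The core: `c, a, v, b` is a path, `v` is first in the order and `a` comes before `b`. -/
theorem semiCohesive_core (n : ℕ) (G : SimpleGraph (Fin n)) (e : Fin n ≃ Fin n)
    (h : ∀ a b x : Fin n, G.Adj a b → e a < e x → e x < e b → G.Adj a x ∨ G.Adj x b)
    (v a b c : Fin n) (hv : ∀ x, x ≠ v → e v < e x) (hvb : G.Adj v b) (hac : G.Adj a c)
    (hcv : c ≠ v) (hcb : c ≠ b) (h1 : ¬ G.Adj v c) (h2 : ¬ G.Adj c b) (h3 : ¬ G.Adj a b)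
    (hab : e a < e b) : False := by
  rcases lt_or_gt_of_ne (e.injective.ne hcb) with hlt | hgt
  · exact (h v b c hvb (hv c hcv) hlt).elim h1 h2
  · exact (h a c b hac hab hgt).elim h3 (fun k => h2 k.symm)

theorem exists_next (n : ℕ) (hn : 5 ≤ n) (v : Fin n) :
    ∃ w : Fin n, w.val = if v.val + 1 = n then 0 else v.val + 1 := by
  refine ⟨⟨if v.val + 1 = n then 0 else v.val + 1, ?_⟩, rfl⟩
  split_ifs <;> omega

theorem exists_prev (n : ℕ) (hn : 5 ≤ n) (v : Fin n) :
    ∃ w : Fin n, w.val = if v.val = 0 then n - 1 else v.val - 1 := by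
  refine ⟨⟨if v.val = 0 then n - 1 else v.val - 1, ?_⟩, rfl⟩
  split_ifs <;> omega

/-- For every `n ≥ 5`, the cycle graph `C_n` has no semi-cohesive vertex-set order. -/
theorem cycleGraph_not_semiCohesive (n : ℕ) (hn : 5 ≤ n) :
    ¬ ∃ e : Fin n ≃ Fin n, ∀ a b x : Fin n,
        (cycleGraph n).Adj a b → e a < e x → e x < e b →
        (cycleGraph n).Adj a x ∨ (cycleGraph n).Adj x b := by
  rintro ⟨e, h⟩
  obtain ⟨v, hv0⟩ := e.surjective (⟨0, by omega⟩ : Fin n)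
  have hv : ∀ x, x ≠ v → e v < e x := by
    intro x hx
    have hne : e x ≠ e v := e.injective.ne hx
    rw [hv0] at hne ⊢
    rw [Fin.lt_def]
    have := Fin.val_ne_of_ne hne
    simp only at this ⊢
    omega
  obtain ⟨p, hp⟩ := exists_next n hn v
  obtain ⟨q, hq⟩ := exists_next n hn p
  obtain ⟨m, hm⟩ := exists_prev n hn v
  obtain ⟨k, hk⟩ := exists_prev n hn m
  have hpm : p ≠ m := by
    rw [Ne, Fin.ext_iff]
    split_ifs at * <;> omega
  rcases lt_or_gt_of_ne (e.injective.ne hpm) with hlt | hgt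
  · apply semiCohesive_core n (cycleGraph n) e h v p m q hv _ _ _ _ _ _ _ hlt <;>
      simp only [cycleGraph_adj_iff, Ne, Fin.ext_iff] <;> split_ifs at * <;> omega
  · apply semiCohesive_core n (cycleGraph n) e h v m p k hv _ _ _ _ _ _ _ hgt <;>
      simp only [cycleGraph_adj_iff, Ne, Fin.ext_iff] <;> split_ifs at * <;> omega
end

section
/- For every n ≥ 5, the cycle graph C_n is not a competitivity graph: there is no finite family of rankings R = (c_1, …, c_r) of Fin n whose competitivity graph G_c(R) is isomorphic to C_n. -/
theorem aux_chain (L : ℕ → ℕ → Prop) (n : ℕ) (hn : 1 ≤ n)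
    (tr : ∀ a b c, L a b → L b c → L a c)
    (h1 : ∀ k, ¬ L k (k+1)) (h1' : ∀ k, ¬ L (k+1) k)
    (h2 : ∀ k, L k (k+3) ∨ L (k+3) k) (h3 : ∀ k, L k (k+2) ∨ L (k+2) k)
    (hp : ¬ L 0 (2*n)) (h0 : L 0 2) : False := by
  have step : ∀ k, L k (k+2) := by
    intro k
    induction k with
    | zero => exact h0
    | succ k ih =>
      have h : L k (k+3) := (h2 k).resolve_right fun h => h1' (k+2) (tr _ _ _ h ih)
      exact (h3 (k+1)).resolve_right fun h' => h1 k (tr _ _ _ h h')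
  have chain : ∀ m, L 0 (2*(m+1)) := by
    intro m
    induction m with
    | zero => exact h0
    | succ m ih => exact tr _ _ _ ih (step _)
  obtain ⟨m, rfl⟩ : ∃ m, n = m + 1 := ⟨n - 1, by omega⟩
  exact hp (chain m)

theorem mod_succ_cases (n k : ℕ) (hn : 5 ≤ n) :
    ((k+1) % n = k % n + 1 ∧ k % n + 1 < n) ∨ ((k+1) % n = 0 ∧ k % n + 1 = n) := by
  have hk := Nat.mod_lt k (show 0 < n by omega)
  have e : (k+1) % n = (k % n + 1) % n := by simp
  rcases Nat.lt_or_ge (k % n + 1) n with h | h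
  · left; rw [e, Nat.mod_eq_of_lt h]; exact ⟨rfl, h⟩
  · right
    have h' : k % n + 1 = n := by omega
    rw [e, h']; simp

theorem nonadj_total {n r : ℕ} (c : Fin r → Equiv.Perm (Fin n)) (i j : Fin n) (hij : i ≠ j)
    (h : ¬ Compete c i j) : (∀ s, Prec (c s) i j) ∨ (∀ s, Prec (c s) j i) := by
  by_contra hc
  push Not at hc
  obtain ⟨⟨s, hs⟩, ⟨t, ht⟩⟩ := hc
  have key : ∀ s a b, a ≠ b → ¬ Prec (c s) a b → Prec (c s) b a := by
    intro s a b hab h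
    unfold Prec at *
    exact lt_of_le_of_ne (not_lt.mp h) fun e => hab ((c s)⁻¹.injective e).symm
  exact h ⟨t, s, key _ _ _ hij.symm ht, key _ _ _ hij hs⟩

/-- For every `n ≥ 5`, the cycle graph `C_n` is not a competitivity graph: no family of
rankings of `Fin n` has a competitivity graph isomorphic to `C_n`. -/
theorem cycleGraph_not_competitivity (n : ℕ) (hn : 5 ≤ n) :
    ¬ ∃ (r : ℕ) (c : Fin r → Equiv.Perm (Fin n)),
        Nonempty (competitivityGraph c ≃g cycleGraph n) := by
  rintro ⟨r, c, ⟨e⟩⟩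
  have hn0 : 0 < n := by omega
  let p : ℕ → Fin n := fun k => ⟨k % n, Nat.mod_lt _ hn0⟩
  let q : ℕ → Fin n := fun k => e.symm (p k)
  have adj : ∀ a b, Compete c (q a) (q b) ↔ (cycleGraph n).Adj (p a) (p b) := fun a b =>
    e.symm.map_adj_iff (v := p a) (w := p b)
  have adj1 : ∀ k, Compete c (q k) (q (k+1)) := by
    intro k
    rw [adj]
    have := mod_succ_cases n k hn
    refine ⟨fun h => ?_, Or.inl ?_⟩
    · have h := congrArg Fin.val h
      simp only [p] at h
      omega
    · simp [p]
  have tot : ∀ a b, p a ≠ p b → ¬ (cycleGraph n).Adj (p a) (p b) →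
      (∀ s, Prec (c s) (q a) (q b)) ∨ (∀ s, Prec (c s) (q b) (q a)) := by
    intro a b h h'
    exact nonadj_total c _ _ (fun h2 => h (e.symm.injective h2)) (by rwa [adj])
  have far : ∀ k d, d = 2 ∨ d = 3 → p k ≠ p (k+d) ∧
      ¬ (cycleGraph n).Adj (p k) (p (k+d)) := by
    intro k d hd
    have a0 := mod_succ_cases n k hn
    have a1 := mod_succ_cases n (k+1) hn
    have a2 := mod_succ_cases n (k+2) hn
    have a3 := mod_succ_cases n (k+3) hn
    have key : k % n ≠ (k+d) % n ∧ (k+1) % n ≠ (k+d) % n ∧ (k+d+1) % n ≠ k % n := by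
      simp only [Nat.add_assoc, Nat.reduceAdd] at a1 a2 a3
      rcases hd with rfl | rfl <;> simp only [Nat.add_assoc, Nat.reduceAdd] <;> omega
    refine ⟨fun h => key.1 (congrArg Fin.val h), ?_⟩
    rintro ⟨-, h | h⟩
    · exact key.2.1 (by simpa [p] using h)
    · exact key.2.2 (by simpa [p] using h)
  obtain ⟨s0, -, -⟩ := adj1 0
  have hq : q (2*n) = q 0 := by simp [q, p]
  have asym : ∀ s a b, Prec (c s) a b → ¬ Prec (c s) b a := fun s a b h h' => lt_asymm h h'
  have f2 := fun k => tot k (k+2) (far k 2 (Or.inl rfl)).1 (far k 2 (Or.inl rfl)).2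
  have f3 := fun k => tot k (k+3) (far k 3 (Or.inr rfl)).1 (far k 3 (Or.inr rfl)).2
  have n1 : ∀ k, ¬ ∀ s, Prec (c s) (q k) (q (k+1)) := fun k h => by
    obtain ⟨s, t, -, h2⟩ := adj1 k
    exact asym _ _ _ h2 (h t)
  have n2 : ∀ k, ¬ ∀ s, Prec (c s) (q (k+1)) (q k) := fun k h => by
    obtain ⟨s, t, h2, -⟩ := adj1 k
    exact asym _ _ _ h2 (h s)
  rcases f2 0 with h0 | h0
  · exact aux_chain (fun a b => ∀ s, Prec (c s) (q a) (q b)) n (by omega)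
      (fun a b d h h' s => lt_trans (h s) (h' s)) n1 n2 f3 f2
      (fun h => by have := h s0; rw [hq] at this; exact lt_irrefl _ this) h0
  · exact aux_chain (fun a b => ∀ s, Prec (c s) (q b) (q a)) n (by omega)
      (fun a b d h h' s => lt_trans (h' s) (h s)) n2 n1 (fun k => (f3 k).symm)
      (fun k => (f2 k).symm)
      (fun h => by have := h s0; rw [hq] at this; exact lt_irrefl _ this) h0
end

section
/- For every n ≥ 2, the odd cycle graph C_{2n+1} on 2n+1 vertices is not a comparability graph: it admits no transitive orientation of its edges. -/
/-- `r` is a transitive orientation of the edges of `G`. -/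
def TransOrientation {V : Type*} (G : SimpleGraph V) (r : V → V → Prop) : Prop :=
  (∀ i j, G.Adj i j ↔ (r i j ∨ r j i)) ∧ (∀ i j, r i j → ¬ r j i) ∧ Transitive r

/-- The `k`-th vertex of the cycle, with indices read modulo `2n+1`. -/
def cycVert (n k : ℕ) : Fin (2 * n + 1) := ⟨k % (2 * n + 1), Nat.mod_lt _ (by omega)⟩

theorem succ_mod_cases (m k : ℕ) (hm : 0 < m) :
    ((k + 1) % m = k % m + 1 ∧ k % m + 1 < m) ∨ ((k + 1) % m = 0 ∧ k % m + 1 = m) := by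
  have h1 : (k + 1) % m = (k % m + 1) % m := by simp
  have h2 := Nat.mod_lt k hm
  rcases Nat.lt_or_ge (k % m + 1) m with h | h
  · left; exact ⟨by rw [h1, Nat.mod_eq_of_lt h], h⟩
  · right
    have h3 : k % m + 1 = m := by omega
    exact ⟨by rw [h1, h3, Nat.mod_self], h3⟩

theorem cycVert_adj (n k : ℕ) (hn : 2 ≤ n) :
    (cycleGraph (2 * n + 1)).Adj (cycVert n k) (cycVert n (k + 1)) := by
  refine ⟨fun h => ?_, Or.inl ?_⟩
  · have h' : k % (2 * n + 1) = (k + 1) % (2 * n + 1) := congrArg Fin.val h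
    have := succ_mod_cases (2 * n + 1) k (by omega)
    omega
  · simp [cycVert]

theorem cycVert_not_adj (n k : ℕ) (hn : 2 ≤ n) :
    ¬ (cycleGraph (2 * n + 1)).Adj (cycVert n k) (cycVert n (k + 1 + 1)) := by
  rintro ⟨-, h⟩
  have h' : (k + 1) % (2 * n + 1) = (k + 1 + 1) % (2 * n + 1) ∨
      (k + 1 + 1 + 1) % (2 * n + 1) = k % (2 * n + 1) := by
    simpa [cycVert] using h
  have h0 := succ_mod_cases (2 * n + 1) k (by omega)
  have h1 := succ_mod_cases (2 * n + 1) (k + 1) (by omega)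
  have h2 := succ_mod_cases (2 * n + 1) (k + 1 + 1) (by omega)
  omega

/-- For every `n ≥ 2`, the odd cycle `C_{2n+1}` is not a comparability graph: it admits
no transitive orientation of its edges. -/
theorem oddCycle_not_comparability (n : ℕ) (hn : 2 ≤ n) :
    ¬ ∃ r : Fin (2 * n + 1) → Fin (2 * n + 1) → Prop,
        TransOrientation (cycleGraph (2 * n + 1)) r := by
  rintro ⟨r, hadj, hasymm, htrans⟩
  have step : ∀ k, r (cycVert n (k + 1)) (cycVert n (k + 1 + 1)) ↔
      ¬ r (cycVert n k) (cycVert n (k + 1)) := by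
    intro k
    have hna := cycVert_not_adj n k hn
    rw [hadj] at hna
    have e0 := (hadj _ _).1 (cycVert_adj n k hn)
    have e1 := (hadj _ _).1 (cycVert_adj n (k + 1) hn)
    constructor
    · intro h h'
      exact hna (Or.inl (htrans h' h))
    · intro h
      rcases e1 with e1 | e1
      · exact e1
      · exact absurd (Or.inr (htrans e1 (e0.resolve_left h))) hna
  have even : ∀ j, r (cycVert n (2 * j)) (cycVert n (2 * j + 1)) ↔
      r (cycVert n 0) (cycVert n 1) := by
    intro j
    induction j with
    | zero => exact Iff.rfl
    | succ j ih =>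
      have a := step (2 * j)
      have b := step (2 * j + 1)
      rw [← ih]
      change r (cycVert n (2 * j + 1 + 1)) (cycVert n (2 * j + 1 + 1 + 1)) ↔ _
      tauto
  have hlast := step (2 * n)
  have hv0 : cycVert n (2 * n + 1) = cycVert n 0 := by simp [cycVert]
  have hv1 : cycVert n (2 * n + 1 + 1) = cycVert n 1 := by
    simp [cycVert, Nat.add_mod]
  have he := even n
  rw [hv1] at hlast
  rw [hv0] at hlast he
  tauto
end

section
/- The complement of the cycle graph C_6 is a competitivity graph but not a comparability graph: there exists a finite family of rankings of Fin 6 whose competitivity graph is isomorphic to the complement of C_6, while the complement of C_6 admits no transitive orientation of its edges. -/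
/-- The complement of `C_6` is a competitivity graph (of some family of rankings of
`Fin 6`) but not a comparability graph (it admits no transitive orientation). -/
theorem complC6_competitivity_not_comparability :
    (∃ (r : ℕ) (c : Fin r → Equiv.Perm (Fin 6)),
        Nonempty (competitivityGraph c ≃g (cycleGraph 6)ᶜ)) ∧
    ¬ ∃ rel : Fin 6 → Fin 6 → Prop, TransOrientation (cycleGraph 6)ᶜ rel := by
  constructor
  · refine ⟨3, ![⟨![2,4,3,0,1,5], ![3,4,0,2,1,5], by decide, by decide⟩,
      ⟨![0,4,5,2,1,3], ![0,4,3,5,1,2], by decide, by decide⟩,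
      ⟨![0,2,1,4,3,5], ![0,2,1,4,3,5], by decide, by decide⟩], ⟨⟨Equiv.refl _, ?_⟩⟩⟩
    intro a b
    simp only [Equiv.refl_apply, SimpleGraph.compl_adj, cycleGraph, competitivityGraph,
      Compete, Prec]
    revert a b
    decide
  · rintro ⟨rel, h1, h2, h3⟩
    have key : ∀ i j, (i ≠ j ∧ ¬ (i ≠ j ∧ ((i.val + 1) % 6 = j.val ∨ (j.val + 1) % 6 = i.val)))
        ↔ (rel i j ∨ rel j i) := h1
    have e03 := (key 0 3).1 (by decide)
    have e02 := (key 0 2).1 (by decide)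
    have e04 := (key 0 4).1 (by decide)
    have e24 := (key 2 4).1 (by decide)
    have e25 := (key 2 5).1 (by decide)
    have e41 := (key 4 1).1 (by decide)
    have n23 := mt (key 2 3).2 (by decide)
    have n34 := mt (key 3 4).2 (by decide)
    have n05 := mt (key 0 5).2 (by decide)
    have n45 := mt (key 4 5).2 (by decide)
    have n01 := mt (key 0 1).2 (by decide)
    have n21 := mt (key 2 1).2 (by decide)
    have t : ∀ a b c, rel a b → rel b c → rel a c := fun a b c hab hbc => h3 hab hbc
    clear h1 h3 key
    grind
end

section
/- A finite simple graph G is a permutation graph if and only if G is both a competitivity graph and a comparability graph. -/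
/-- The permutation graph of a permutation `π` of `Fin n`: distinct `i` and `j` are
adjacent exactly when `(i, j)` is an inversion of `π`. -/
def permGraph {n : ℕ} (π : Equiv.Perm (Fin n)) : SimpleGraph (Fin n) where
  Adj i j := (i < j ∧ π⁻¹ j < π⁻¹ i) ∨ (j < i ∧ π⁻¹ i < π⁻¹ j)
  symm := by
    constructor
    rintro i j (⟨h1, h2⟩ | ⟨h1, h2⟩)
    · exact Or.inr ⟨h1, h2⟩
    · exact Or.inl ⟨h1, h2⟩
  loopless := by
    constructor
    rintro i (⟨h1, _⟩ | ⟨h1, _⟩) <;> exact lt_irrefl _ h1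

/-- `G` is a permutation graph if it is isomorphic to the permutation graph of some
permutation of some `Fin n`. -/
def IsPermutationGraph {V : Type*} (G : SimpleGraph V) : Prop :=
  ∃ (n : ℕ) (π : Equiv.Perm (Fin n)), Nonempty (G ≃g permGraph π)

/-- `G` is a competitivity graph if it is isomorphic to the competitivity graph of some
family of rankings. -/
def IsCompetitivityGraph {V : Type*} (G : SimpleGraph V) : Prop :=
  ∃ (n r : ℕ) (c : Fin r → Equiv.Perm (Fin n)), Nonempty (G ≃g competitivityGraph c)

/-- `G` is a comparability graph if it admits a transitive orientation of its edges. -/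
def IsComparabilityGraph {V : Type*} (G : SimpleGraph V) : Prop :=
  ∃ r : V → V → Prop, TransOrientation G r

theorem exists_equiv_of_sto {V : Type*} [Fintype V] (R : V → V → Prop)
    (htri : ∀ a b, R a b ∨ a = b ∨ R b a) (hirr : ∀ a, ¬ R a a)
    (htr : ∀ a b c, R a b → R b c → R a c) :
    ∃ e : V ≃ Fin (Fintype.card V), ∀ a b, e a < e b ↔ R a b := by
  classical
  have : IsStrictTotalOrder V R :=
    { trichotomous := fun a b h1 h2 => by
        rcases htri a b with h | h | h
        · exact absurd h h1
        · exact h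
        · exact absurd h h2
      irrefl := hirr
      trans := htr }
  let : LinearOrder V := linearOrderOfSTO R
  let e : V ≃o Fin (Fintype.card V) := (Fintype.orderIsoFinOfCardEq V rfl).symm
  exact ⟨e.toEquiv, fun a b => e.lt_iff_lt⟩

theorem sto_union {V : Type*} (r q : V → V → Prop)
    (hr : ∀ i j, r i j → ¬ r j i) (hrt : ∀ a b c, r a b → r b c → r a c)
    (hqt : ∀ a b c, q a b → q b c → q a c)
    (hq : ∀ i j, (q i j ∨ q j i) ↔ i ≠ j ∧ ¬ (r i j ∨ r j i))
    [Fintype V] :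
    ∃ e : V ≃ Fin (Fintype.card V), ∀ a b, e a < e b ↔ (r a b ∨ q a b) := by
  have hqi : ∀ a, ¬ q a a := fun a h => ((hq a a).1 (Or.inl h)).1 rfl
  have hri : ∀ a, ¬ r a a := fun a h => hr a a h h
  have tri : ∀ a b, (r a b ∨ q a b) ∨ a = b ∨ (r b a ∨ q b a) := by
    intro a b
    have := hq a b
    tauto
  apply exists_equiv_of_sto (fun a b => r a b ∨ q a b) tri
  · intro a h
    exact h.elim (hri a) (hqi a)
  · intro a b c h1 h2
    rcases tri a c with h | rfl | h
    · exact h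
    · have := hq a b
      have := hr a b
      have := hqt a b a
      have := hqi a
      tauto
    · have no : ∀ x y, r x y → ¬ q x y ∧ ¬ q y x := by
        intro x y hxy
        have := hq x y
        tauto
      exfalso
      rcases h1 with h1 | h1 <;> rcases h2 with h2 | h2 <;> rcases h with h | h
      · exact hr _ _ (hrt _ _ _ h1 h2) h
      · exact (no _ _ (hrt _ _ _ h1 h2)).2 h
      · exact (no _ _ (hrt _ _ _ h h1)).2 h2
      · exact (no _ _ h1).2 (hqt _ _ _ h2 h)
      · exact (no _ _ (hrt _ _ _ h2 h)).2 h1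
      · exact (no _ _ h2).2 (hqt _ _ _ h h1)
      · exact (no _ _ h).2 (hqt _ _ _ h1 h2)
      · exact hqi _ (hqt _ _ _ (hqt _ _ _ h1 h2) h)

/-- A finite simple graph is a permutation graph iff it is both a competitivity graph
and a comparability graph. -/
theorem isPermutationGraph_iff {V : Type*} [Fintype V] (G : SimpleGraph V) :
    IsPermutationGraph G ↔ IsCompetitivityGraph G ∧ IsComparabilityGraph G := by
  constructor
  · rintro ⟨n, π, ⟨f⟩⟩
    refine ⟨⟨n, 2, ![1, π], ⟨⟨f.toEquiv, ?_⟩⟩⟩,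
      fun u v => f u < f v ∧ π⁻¹ (f v) < π⁻¹ (f u), ?_, ?_, ?_⟩
    · intro a b
      rw [← f.map_adj_iff]
      change (∃ s t, Prec (![1, π] s) (f a) (f b) ∧ Prec (![1, π] t) (f b) (f a)) ↔
        (f a < f b ∧ π⁻¹ (f b) < π⁻¹ (f a)) ∨ (f b < f a ∧ π⁻¹ (f a) < π⁻¹ (f b))
      simp only [Prec, Fin.exists_fin_two]
      change ((f a < f b ∧ f b < f a) ∨ (f a < f b ∧ π⁻¹ (f b) < π⁻¹ (f a))) ∨
        ((π⁻¹ (f a) < π⁻¹ (f b) ∧ f b < f a) ∨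
          (π⁻¹ (f a) < π⁻¹ (f b) ∧ π⁻¹ (f b) < π⁻¹ (f a))) ↔ _
      have h1 : f a < f b → ¬ f b < f a := fun h => lt_asymm h
      have h2 : π⁻¹ (f a) < π⁻¹ (f b) → ¬ π⁻¹ (f b) < π⁻¹ (f a) := fun h => lt_asymm h
      tauto
    · intro a b
      rw [← f.map_adj_iff]
      simp [permGraph]
    · intro a b h h'
      exact lt_asymm h.1 h'.1
    · intro a b c h h'
      exact ⟨h.1.trans h'.1, h'.2.trans h.2⟩
  · rintro ⟨⟨n, k, c, ⟨f⟩⟩, r, hadj, hr, hrt⟩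
    obtain ⟨q, hqt, hq⟩ : ∃ q : V → V → Prop, (∀ a b c, q a b → q b c → q a c) ∧
        ∀ i j, (q i j ∨ q j i) ↔ i ≠ j ∧ ¬ (r i j ∨ r j i) := by
      rcases Nat.eq_zero_or_pos k with rfl | hk
      · refine ⟨fun a b => f a < f b, fun a b c => lt_trans, fun i j => ?_⟩
        rw [← hadj, ← f.map_adj_iff, ← f.injective.ne_iff]
        have : ¬ (competitivityGraph c).Adj (f i) (f j) := by
          rintro ⟨s, -⟩
          exact s.elim0
        simp only [this, not_false_iff, and_true]
        exact lt_or_lt_iff_ne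
      · refine ⟨fun a b => ∀ s, Prec (c s) (f a) (f b),
          fun a b c h h' s => lt_trans (h s) (h' s), fun i j => ?_⟩
        rw [← hadj, ← f.map_adj_iff, ← f.injective.ne_iff]
        have key : ∀ s, f i ≠ f j → (¬ Prec (c s) (f i) (f j) ↔ Prec (c s) (f j) (f i)) := by
          intro s hne
          have : (c s)⁻¹ (f i) ≠ (c s)⁻¹ (f j) := (c s)⁻¹.injective.ne hne
          unfold Prec
          grind
        have irr : ∀ s a, ¬ Prec (c s) a a := fun s a => lt_irrefl _
        have asy : ∀ s a b, Prec (c s) a b → ¬ Prec (c s) b a := fun s a b => lt_asymm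
        change _ ↔ _ ∧ ¬ ∃ s t, _ ∧ _
        constructor
        · intro h
          constructor
          · intro he
            simp only [he] at h
            exact h.elim (fun h => irr _ _ (h ⟨0, hk⟩)) (fun h => irr _ _ (h ⟨0, hk⟩))
          · rintro ⟨s, t, h1, h2⟩
            exact h.elim (fun h => asy _ _ _ (h t) h2) (fun h => asy _ _ _ (h s) h1)
        · rintro ⟨hne, h⟩
          by_contra! hc
          obtain ⟨⟨s, hs⟩, t, ht⟩ := hc
          exact h ⟨t, s, by_contra fun h' => ht ((key t hne).1 h'), (key s hne).1 hs⟩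
    obtain ⟨e₁, h₁⟩ := sto_union r q hr (fun a b c => @hrt a b c) hqt hq
    obtain ⟨e₂, h₂⟩ := sto_union (fun a b => r b a) q (fun i j => hr j i)
      (fun a b c h h' => hrt h' h) hqt (fun i j => by rw [hq, or_comm])
    refine ⟨_, e₂.symm.trans e₁, ⟨⟨e₁, ?_⟩⟩⟩
    intro a b
    have hp : ∀ a, (e₂.symm.trans e₁)⁻¹ (e₁ a) = e₂ a := fun a => by
      rw [Equiv.Perm.inv_def]; simp
    simp only [permGraph, hp, h₁, h₂, hadj]
    have := hq a b
    have := hr a b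
    have hqa : q a b → ¬ q b a := fun h h' => by
      have := (hq a a).1 (Or.inl (hqt _ _ _ h h'))
      exact this.1 rfl
    tauto
end

section
/- Let R = (c_1, …, c_r) be a finite family of rankings of Fin n and let D be a set of eventual competitors (a connected component of the competitivity graph G_c(R)). If a, b ∈ D, x ∈ Fin n, and there is a ranking c_m ∈ R with a ≺_{c_m} x ≺_{c_m} b, then x ∈ D. -/
/-- Convexity of sets of eventual competitors: if `a, b` belong to a connected component
`D` of the competitivity graph and `a ≺_{c_m} x ≺_{c_m} b` in some ranking `c_m`, then
`x` belongs to `D`. -/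
theorem eventualCompetitors_convex {n r : ℕ} (c : Fin r → Equiv.Perm (Fin n))
    (D : (competitivityGraph c).ConnectedComponent) (a b x : Fin n)
    (ha : a ∈ D.supp) (hb : b ∈ D.supp) (m : Fin r)
    (hax : Prec (c m) a x) (hxb : Prec (c m) x b) :
    x ∈ D.supp := by
  rw [SimpleGraph.ConnectedComponent.mem_supp_iff] at ha hb ⊢
  by_contra hx
  have hab : (competitivityGraph c).Reachable a b :=
    SimpleGraph.ConnectedComponent.exact (ha.trans hb.symm)
  -- everything reachable from `a` precedes `x` in `c m`
  have key : ∀ y z : Fin n, (competitivityGraph c).Walk y z →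
      (competitivityGraph c).connectedComponentMk y = D →
      Prec (c m) y x → Prec (c m) z x := by
    intro y z w
    induction w with
    | nil => exact fun _ h => h
    | @cons u v w' hadj p ih =>
      intro hu hux
      have hv : (competitivityGraph c).connectedComponentMk v = D :=
        (SimpleGraph.ConnectedComponent.sound hadj.reachable).symm.trans hu
      refine ih hv ?_
      by_contra hvx
      have nadj : ∀ y, (competitivityGraph c).connectedComponentMk y = D →
          ¬ Compete c y x := by
        intro y hy hc
        have hadj' : (competitivityGraph c).Adj y x := hc
        exact hx ((SimpleGraph.ConnectedComponent.sound hadj'.reachable).symm.trans hy)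
      have hne : v ≠ x := fun h => hx (h ▸ hv)
      have hxv : Prec (c m) x v := by
        rcases lt_trichotomy ((c m)⁻¹ v) ((c m)⁻¹ x) with h | h | h
        · exact absurd h hvx
        · exact absurd ((c m)⁻¹.injective h) hne
        · exact h
      obtain ⟨s, t, h1, h2⟩ := hadj
      have hA : ¬ Prec (c t) x u := fun h => nadj u hu ⟨m, t, hux, h⟩
      have hB : ¬ Prec (c t) v x := fun h => nadj v hv ⟨t, m, h, hxv⟩
      unfold Prec at hA hB h2
      exact absurd h2 (not_lt.mpr ((not_lt.mp hA).trans (not_lt.mp hB)))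
  obtain ⟨w⟩ := hab
  exact lt_asymm hxb (key a b w ha hax)
end

section
/- Let R = (c_1, …, c_r) be a finite family of rankings of Fin n and let D be a set of eventual competitors (a connected component of the competitivity graph G_c(R)). If some a ∈ D occupies the first position of some ranking c_m ∈ R (i.e., c_m⁻¹(a) is the minimal position), then every element x ∈ Fin n that occupies the first position of some ranking c_s ∈ R belongs to D. -/
/-- If a connected component `D` of the competitivity graph contains an element that
occupies the first position of some ranking, then every element occupying the first
position of some ranking belongs to `D`. -/
theorem firstPositions_subset_component {n r : ℕ} (c : Fin r → Equiv.Perm (Fin n))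
    (D : (competitivityGraph c).ConnectedComponent) (a : Fin n) (ha : a ∈ D.supp)
    (m : Fin r) (hm : ((c m)⁻¹ a).val = 0) :
    ∀ x : Fin n, (∃ s : Fin r, ((c s)⁻¹ x).val = 0) → x ∈ D.supp := by
  rintro x ⟨s, hs⟩
  by_cases hxa : x = a
  · rw [hxa]; exact ha
  have key : ∀ (t : Fin r) (u v : Fin n), u ≠ v → ((c t)⁻¹ u).val = 0 → Prec (c t) u v := by
    intro t u v huv h
    have hne : ((c t)⁻¹ u).val ≠ ((c t)⁻¹ v).val := fun h' =>
      huv ((c t)⁻¹.injective (Fin.ext h'))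
    show ((c t)⁻¹ u).val < ((c t)⁻¹ v).val
    omega
  have hadj : (competitivityGraph c).Adj x a :=
    ⟨s, m, key s x a hxa hs, key m a x (Ne.symm hxa) hm⟩
  rw [SimpleGraph.ConnectedComponent.mem_supp_iff] at ha ⊢
  rw [← ha]
  exact SimpleGraph.ConnectedComponent.sound hadj.reachable
end

section
/- Let R = (c_1, …, c_r) be a finite family of rankings of Fin n (n ≥ 1, r ≥ 1). For every set of eventual competitors D (connected component of the competitivity graph G_c(R)) there exist positions p ≤ q in Fin n such that D = {x ∈ Fin n : ∃ s, p ≤ c_s⁻¹(x) ≤ q}; moreover p is the minimum and q is the maximum of the positions c_s⁻¹(x) taken over all x ∈ D and all rankings c_s ∈ R. -/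
/-- An element outside a component lies on one side of that component in all rankings. -/
theorem side_aux {n r : ℕ} (c : Fin r → Equiv.Perm (Fin n))
    (D : (competitivityGraph c).ConnectedComponent) (x : Fin n) (hx : x ∉ D.supp)
    (d d' : Fin n) (hd : d ∈ D.supp) (hd' : d' ∈ D.supp) (s t : Fin r)
    (h : (c s)⁻¹ x < (c s)⁻¹ d) : (c t)⁻¹ x < (c t)⁻¹ d' := by
  have hnon : ∀ e ∈ D.supp, ∀ s t : Fin r, (c s)⁻¹ x < (c s)⁻¹ e → (c t)⁻¹ x < (c t)⁻¹ e := by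
    intro e he s t h
    by_contra hlt
    have hne : (c t)⁻¹ e ≠ (c t)⁻¹ x := by
      intro heq
      have := (c t)⁻¹.injective heq
      exact hx (this ▸ he)
    have hadj : (competitivityGraph c).Adj x e := ⟨s, t, h, lt_of_le_of_ne (not_lt.mp hlt) hne⟩
    apply hx
    rw [SimpleGraph.ConnectedComponent.mem_supp_iff] at he ⊢
    rw [← he]
    exact SimpleGraph.ConnectedComponent.sound hadj.reachable
  have hreach : (competitivityGraph c).Reachable d d' := by
    rw [SimpleGraph.ConnectedComponent.mem_supp_iff] at hd hd'
    exact SimpleGraph.ConnectedComponent.exact (hd.trans hd'.symm)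
  obtain ⟨w⟩ := hreach
  induction w generalizing s with
  | nil => exact hnon _ hd s t h
  | @cons u v w hadj _ ih =>
    have hv : v ∈ D.supp := by
      rw [SimpleGraph.ConnectedComponent.mem_supp_iff] at hd ⊢
      rw [← hd]
      exact SimpleGraph.ConnectedComponent.sound hadj.symm.reachable
    obtain ⟨a, b, hab, _⟩ := hadj
    exact ih hv hd' a ((hnon _ hd s a h).trans hab)

/-- Every set of eventual competitors (connected component of the competitivity graph)
is an interval of positions: `D = {x | ∃ s, p ≤ c_s⁻¹(x) ≤ q}` where `p` and `q` are
the minimum and maximum positions of the elements of `D` over all rankings. -/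
theorem eventualCompetitors_interval {n r : ℕ} (hn : 1 ≤ n) (hr : 1 ≤ r)
    (c : Fin r → Equiv.Perm (Fin n))
    (D : (competitivityGraph c).ConnectedComponent) :
    ∃ p q : Fin n, p ≤ q ∧
      D.supp = {x : Fin n | ∃ s : Fin r, p ≤ (c s)⁻¹ x ∧ (c s)⁻¹ x ≤ q} ∧
      (∀ x ∈ D.supp, ∀ s : Fin r, p ≤ (c s)⁻¹ x ∧ (c s)⁻¹ x ≤ q) ∧
      (∃ x ∈ D.supp, ∃ s : Fin r, (c s)⁻¹ x = p) ∧
      (∃ x ∈ D.supp, ∃ s : Fin r, (c s)⁻¹ x = q) := by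
  classical
  obtain ⟨x0, hx0⟩ := D.nonempty_supp
  let P : Finset (Fin n) :=
    Finset.univ.filter (fun p => ∃ x ∈ D.supp, ∃ s : Fin r, (c s)⁻¹ x = p)
  have hmemP : ∀ x ∈ D.supp, ∀ s, (c s)⁻¹ x ∈ P := by
    intro x hx s
    exact Finset.mem_filter.mpr ⟨Finset.mem_univ _, x, hx, s, rfl⟩
  have hP : P.Nonempty := ⟨_, hmemP x0 hx0 ⟨0, hr⟩⟩
  have hall : ∀ x ∈ D.supp, ∀ s : Fin r, P.min' hP ≤ (c s)⁻¹ x ∧ (c s)⁻¹ x ≤ P.max' hP :=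
    fun x hx s => ⟨P.min'_le _ (hmemP x hx s), P.le_max' _ (hmemP x hx s)⟩
  have h1 := (Finset.mem_filter.mp (P.min'_mem hP)).2
  have h2 := (Finset.mem_filter.mp (P.max'_mem hP)).2
  generalize P.min' hP = p at *
  generalize P.max' hP = q at *
  refine ⟨p, q, (hall x0 hx0 ⟨0, hr⟩).1.trans (hall x0 hx0 ⟨0, hr⟩).2, ?_, hall, h1, h2⟩
  ext x
  refine ⟨fun hx => ⟨⟨0, hr⟩, hall x hx _⟩, ?_⟩
  rintro ⟨s, hpx, hxq⟩
  have hinv : ∀ i, (c s)⁻¹ (c s i) = i := fun i => (c s).symm_apply_apply i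
  by_contra hx
  obtain ⟨y, hy, t, hyt⟩ := h1
  obtain ⟨y', hy', t', hyt'⟩ := h2
  have hne : ∀ e ∈ D.supp, (c s)⁻¹ e ≠ (c s)⁻¹ x := by
    intro e he heq
    exact hx ((c s)⁻¹.injective heq ▸ he)
  rcases lt_or_gt_of_ne (hne y hy) with hlt | hlt
  · -- `x` is after the component
    have hD : ∀ d ∈ D.supp, (c s)⁻¹ d < (c s)⁻¹ x := by
      intro d hd
      by_contra hcon
      have := side_aux c D x hx d y hd hy s s
        (lt_of_le_of_ne (not_lt.mp hcon) (hne d hd).symm)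
      exact absurd this hlt.asymm
    have hcard : (Finset.Ici ((c s)⁻¹ x)).card ≤ (Finset.Ioi q).card := by
      apply Finset.card_le_card_of_injOn (fun i => (c t')⁻¹ (c s i))
      · intro i hi
        have hi' : (c s)⁻¹ x ≤ i := by simpa using hi
        have hz : c s i ∉ D.supp := by
          intro hz
          have := hD _ hz
          rw [hinv] at this
          exact absurd hi' this.not_ge
        have hq : q < (c t')⁻¹ (c s i) := by
          by_contra hcon
          have hne' : (c t')⁻¹ (c s i) ≠ (c t')⁻¹ y' := fun heq =>
            hz ((c t')⁻¹.injective heq ▸ hy')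
          have := side_aux c D _ hz y' y' hy' hy' t' s
            (lt_of_le_of_ne (by rw [hyt']; exact not_lt.mp hcon) hne')
          rw [hinv] at this
          exact absurd (this.trans (hD _ hy')) hi'.not_gt
        simpa using hq
      · intro a _ b _ hab
        exact (c s).injective ((c t')⁻¹.injective hab)
    rw [Fin.card_Ici, Fin.card_Ioi] at hcard
    have := Fin.le_def.mp hxq
    have := q.isLt
    omega
  · -- `x` is before the component
    have hD : ∀ d ∈ D.supp, (c s)⁻¹ x < (c s)⁻¹ d := fun d hd =>
      side_aux c D x hx y d hy hd s s hlt
    have hcard : (Finset.Iic ((c s)⁻¹ x)).card ≤ (Finset.Iio p).card := by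
      apply Finset.card_le_card_of_injOn (fun i => (c t)⁻¹ (c s i))
      · intro i hi
        have hi' : i ≤ (c s)⁻¹ x := by simpa using hi
        have hz : c s i ∉ D.supp := by
          intro hz
          have := hD _ hz
          rw [hinv] at this
          exact absurd hi' this.not_ge
        have hp : (c t)⁻¹ (c s i) < p := by
          rw [← hyt]
          apply side_aux c D _ hz y y hy hy s t
          rw [hinv]
          exact hi'.trans_lt hlt
        simpa using hp
      · intro a _ b _ hab
        exact (c s).injective ((c t)⁻¹.injective hab)
    rw [Fin.card_Iic, Fin.card_Iio] at hcard
    have := Fin.le_def.mp hpx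
    omega
end

section
/- Let R = (c_1, …, c_r) be a finite family of rankings of Fin n and let D_1 ≠ D_2 be two different sets of eventual competitors (connected components of the competitivity graph G_c(R)). Then the following are equivalent: (i) there exist a ∈ D_1, b ∈ D_2 and a ranking c_m ∈ R with a ≺_{c_m} b; (ii) for every a ∈ D_1 and every b ∈ D_2 there is a ranking c_m ∈ R with a ≺_{c_m} b. -/
theorem all_prec_of_prec {n r : ℕ} (c : Fin r → Equiv.Perm (Fin n)) {a b : Fin n}
    (h : ¬ (competitivityGraph c).Reachable a b) (hm : ∃ m, Prec (c m) a b) (s : Fin r) :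
    Prec (c s) a b := by
  obtain ⟨m, hm⟩ := hm
  rcases lt_trichotomy ((c s)⁻¹ a) ((c s)⁻¹ b) with h1 | h1 | h1
  · exact h1
  · exact absurd ((c s)⁻¹.injective h1 ▸ SimpleGraph.Reachable.refl a) h
  · exact absurd (SimpleGraph.Adj.reachable
      (show (competitivityGraph c).Adj a b from ⟨m, s, hm, h1⟩)) h

theorem prec_left {n r : ℕ} (c : Fin r → Equiv.Perm (Fin n)) {a a' b : Fin n}
    (w : (competitivityGraph c).Walk a a')
    (h : ¬ (competitivityGraph c).Reachable a b) (hm : ∃ m, Prec (c m) a b) :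
    ∃ m, Prec (c m) a' b := by
  induction w with
  | nil => exact hm
  | cons hadj p ih =>
    refine ih (fun h' => h (hadj.reachable.trans h')) ?_
    obtain ⟨s, t, h1, h2⟩ := hadj
    exact ⟨t, lt_trans h2 (all_prec_of_prec c h hm t)⟩

theorem prec_right {n r : ℕ} (c : Fin r → Equiv.Perm (Fin n)) {a b b' : Fin n}
    (w : (competitivityGraph c).Walk b b')
    (h : ¬ (competitivityGraph c).Reachable a b) (hm : ∃ m, Prec (c m) a b) :
    ∃ m, Prec (c m) a b' := by
  induction w with
  | nil => exact hm
  | cons hadj p ih =>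
    refine ih (fun h' => h (h'.trans hadj.reachable.symm)) ?_
    obtain ⟨s, t, h1, h2⟩ := hadj
    exact ⟨s, lt_trans (all_prec_of_prec c h hm s) h1⟩

/-- For two different connected components `D_1 ≠ D_2` of the competitivity graph, the
following are equivalent: some element of `D_1` precedes some element of `D_2` in some
ranking, iff every element of `D_1` precedes every element of `D_2` in some ranking. -/
theorem outlink_iff_all_outlinks {n r : ℕ} (c : Fin r → Equiv.Perm (Fin n))
    (D1 D2 : (competitivityGraph c).ConnectedComponent) (hD : D1 ≠ D2) :
    (∃ a ∈ D1.supp, ∃ b ∈ D2.supp, ∃ m : Fin r, Prec (c m) a b) ↔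
    (∀ a ∈ D1.supp, ∀ b ∈ D2.supp, ∃ m : Fin r, Prec (c m) a b) := by
  constructor
  · rintro ⟨a, ha, b, hb, hm⟩ a' ha' b' hb'
    rw [SimpleGraph.ConnectedComponent.mem_supp_iff] at ha hb ha' hb'
    have hab : ¬ (competitivityGraph c).Reachable a b := fun h =>
      hD (ha ▸ hb ▸ SimpleGraph.ConnectedComponent.sound h)
    have haa : (competitivityGraph c).Reachable a a' :=
      SimpleGraph.ConnectedComponent.exact (ha.trans ha'.symm)
    have hbb : (competitivityGraph c).Reachable b b' :=
      SimpleGraph.ConnectedComponent.exact (hb.trans hb'.symm)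
    obtain ⟨w⟩ := id haa
    obtain ⟨v⟩ := hbb
    exact prec_right c v (fun h => hab (haa.trans h)) (prec_left c w hab hm)
  · intro h
    obtain ⟨a, ha⟩ := D1.nonempty_supp
    obtain ⟨b, hb⟩ := D2.nonempty_supp
    exact ⟨a, ha, b, hb, h a ha b hb⟩
end

section
/- Let R = (c_1, …, c_r) be a finite family of rankings of Fin n and let D_1, D_2, D_3 be three pairwise different sets of eventual competitors (connected components of the competitivity graph G_c(R)). Write D_i → D_j when for every a ∈ D_i and every b ∈ D_j there is a ranking c_m ∈ R with a ≺_{c_m} b. If D_1 → D_2 and D_2 → D_3, then D_1 → D_3. -/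
/-- The relation `D_i → D_j` (every element of `D_i` precedes every element of `D_j` in
some ranking) between sets of eventual competitors is transitive. -/
theorem componentOrder_transitive {n r : ℕ} (c : Fin r → Equiv.Perm (Fin n))
    (D1 D2 D3 : (competitivityGraph c).ConnectedComponent)
    (h12 : D1 ≠ D2) (h13 : D1 ≠ D3) (h23 : D2 ≠ D3)
    (hD12 : ∀ a ∈ D1.supp, ∀ b ∈ D2.supp, ∃ m : Fin r, Prec (c m) a b)
    (hD23 : ∀ a ∈ D2.supp, ∀ b ∈ D3.supp, ∃ m : Fin r, Prec (c m) a b) :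
    ∀ a ∈ D1.supp, ∀ b ∈ D3.supp, ∃ m : Fin r, Prec (c m) a b := by
  intro a ha b hb
  obtain ⟨x, hx⟩ := D2.nonempty_supp
  obtain ⟨m, hm⟩ := hD12 a ha x hx
  obtain ⟨k, hk⟩ := hD23 x hx b hb
  refine ⟨m, ?_⟩
  rcases lt_trichotomy ((c m)⁻¹ x) ((c m)⁻¹ b) with h | h | h
  · exact lt_trans hm h
  · unfold Prec at *
    rwa [h] at hm
  · exfalso
    have hadj : (competitivityGraph c).Adj x b := ⟨k, m, hk, h⟩
    rw [SimpleGraph.ConnectedComponent.mem_supp_iff] at hx hb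
    exact h23 (by
      rw [← hx, ← hb]
      exact SimpleGraph.ConnectedComponent.sound hadj.reachable)
end
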